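/- There is at most one function ψ∈C²(Ω), Lipschitz continuous on Ω̄, with 0≤ψ≤Q, satisfying Δψ=f(ψ) in Ω, ψ=0 on Γ₀, ψ=Q on Γ₁, and ∂_{x₂}ψ≥0 in Ω: any two such functions coincide on Ω. -/

import Mathlib

open Real Set MeasureTheory

noncomputable section

/-- Partial derivative in the `x₁` direction. -/
def pd1 (φ : ℝ × ℝ → ℝ) (x : ℝ × ℝ) : ℝ := fderiv ℝ φ x (1, 0)

/-- Partial derivative in the `x₂` direction. -/
def pd2 (φ : ℝ × ℝ → ℝ) (x : ℝ × ℝ) : ℝ := fderiv ℝ φ x (0, 1)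

/-- The Laplacian `Δφ = ∂²φ/∂x₁² + ∂²φ/∂x₂²`. -/
def lap (φ : ℝ × ℝ → ℝ) (x : ℝ × ℝ) : ℝ := pd1 (pd1 φ) x + pd2 (pd2 φ) x

/-!
The sliding method. Extend two solutions `u`, `v` to the plane by their boundary values `0` and `Q`
and shift `u` vertically by `τ` so far that it lies above `v`. Since `f` is nonincreasing on
`[0, Q]`, the nonnegative difference `u(x₁, x₂ + τ) - v(x₁, x₂)` is superharmonic where both terms
solve the equation. Nonnegative superharmonic functions on a strip between two graphs satisfy a
Harnack inequality along vertical segments, with a constant independent of `x₁`: on a rectangle they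
dominate a multiple of `cos (ν (x₁ - x)) * sinh (κ (Y - x₂))`, which is subharmonic where positive
as soon as `|ν| < |κ|`. Applied to `v = u` and a small shift, this shows that solutions leave their
boundary values at a rate uniform in `x₁`; applied to a shift `τ > 0`, it then bounds the difference
away from zero on the whole unbounded strip, so that `τ` can be decreased. Hence the least
admissible shift is `0`, and `v ≤ u`.
-/

open scoped Topology

section SecondOrder

variable {E F : Type*} [NormedAddCommGroup E] [NormedSpace ℝ E] [NormedAddCommGroup F]
  [NormedSpace ℝ F] {φ : E → F} {z : E}

lemma deriv_deriv_nonneg_of_isLocalMin {g : ℝ → ℝ} {t : ℝ} (hg : ContinuousAt g t)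
    (hmin : IsLocalMin g t) : 0 ≤ deriv (deriv g) t := by
  by_contra! hneg
  have hmax : IsLocalMax g t := isLocalMax_of_deriv_deriv_neg hneg hmin.deriv_eq_zero hg
  have hconst : g =ᶠ[𝓝 t] fun _ => g t := by
    filter_upwards [hmin, hmax] with s h_ge h_le using le_antisymm h_le h_ge
  simp [hconst.deriv.deriv_eq] at hneg

lemma hasDerivAt_comp_add_smul {t : ℝ} {e : E} (h : DifferentiableAt ℝ φ (z + t • e)) :
    HasDerivAt (fun s : ℝ => φ (z + s • e)) (fderiv ℝ φ (z + t • e) e) t := by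
  have hline : HasDerivAt (fun s : ℝ => z + s • e) e t := by
    simpa using ((hasDerivAt_id t).smul_const e).const_add z
  exact h.hasFDerivAt.comp_hasDerivAt t hline

lemma differentiableAt_fderiv_apply (h : ContDiffAt ℝ 2 φ z) (e : E) :
    DifferentiableAt ℝ (fun w => fderiv ℝ φ w e) z :=
  ((h.fderiv_right (m := 1) (by norm_num)).differentiableAt (by norm_num)).clm_apply
    (differentiableAt_const e)

lemma eventually_differentiableAt (h : ContDiffAt ℝ 2 φ z) :
    ∀ᶠ w in 𝓝 z, DifferentiableAt ℝ φ w := by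
  filter_upwards [h.eventually (by simp)] with w hw using hw.differentiableAt (by norm_num)

lemma fderiv_fderiv_apply_nonneg_of_isLocalMin {φ : E → ℝ} (h : ContDiffAt ℝ 2 φ z)
    (hmin : IsLocalMin φ z) (e : E) : 0 ≤ fderiv ℝ (fun w => fderiv ℝ φ w e) z e := by
  set line : ℝ → E := fun t => z + t • e with hline
  have hcont : Continuous line := by fun_prop
  have hzero : line 0 = z := by simp [hline]
  have hfirst : deriv (φ ∘ line) =ᶠ[𝓝 0] fun t => fderiv ℝ φ (line t) e := by
    filter_upwards [hcont.continuousAt.eventually (hzero ▸ eventually_differentiableAt h)]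
      with t ht using (hasDerivAt_comp_add_smul ht).deriv
  have hsecond : deriv (deriv (φ ∘ line)) 0 = fderiv ℝ (fun w => fderiv ℝ φ w e) z e := by
    rw [hfirst.deriv_eq, ← hzero]
    exact (hasDerivAt_comp_add_smul (hzero.symm ▸ differentiableAt_fderiv_apply h e)).deriv
  rw [← hsecond]
  refine deriv_deriv_nonneg_of_isLocalMin ?_ ?_
  · exact ContinuousAt.comp (hzero.symm ▸ h.continuousAt) hcont.continuousAt
  · exact IsLocalMin.comp_continuous (hzero.symm ▸ hmin) hcont.continuousAt

end SecondOrder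

section Laplacian

variable {φ χ : ℝ × ℝ → ℝ} {z : ℝ × ℝ}

lemma lap_nonneg_of_isLocalMin (h : ContDiffAt ℝ 2 φ z) (hmin : IsLocalMin φ z) :
    0 ≤ lap φ z :=
  add_nonneg (fderiv_fderiv_apply_nonneg_of_isLocalMin h hmin (1, 0))
    (fderiv_fderiv_apply_nonneg_of_isLocalMin h hmin (0, 1))

lemma lap_congr (h : φ =ᶠ[𝓝 z] χ) : lap φ z = lap χ z := by
  have hpd (e : ℝ × ℝ) :
      fderiv ℝ (fun w => fderiv ℝ φ w e) z e = fderiv ℝ (fun w => fderiv ℝ χ w e) z e := by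
    have hfirst : (fun w => fderiv ℝ φ w e) =ᶠ[𝓝 z] fun w => fderiv ℝ χ w e := by
      filter_upwards [h.fderiv (𝕜 := ℝ)] with w hw
      rw [hw]
    rw [hfirst.fderiv_eq]
  exact congrArg₂ (· + ·) (hpd (1, 0)) (hpd (0, 1))

lemma lap_sub (hφ : ContDiffAt ℝ 2 φ z) (hχ : ContDiffAt ℝ 2 χ z) :
    lap (fun w => φ w - χ w) z = lap φ z - lap χ z := by
  have hpd (e : ℝ × ℝ) : fderiv ℝ (fun w => fderiv ℝ (fun w => φ w - χ w) w e) z e =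
      fderiv ℝ (fun w => fderiv ℝ φ w e) z e - fderiv ℝ (fun w => fderiv ℝ χ w e) z e := by
    have hfirst : (fun w => fderiv ℝ (fun w => φ w - χ w) w e) =ᶠ[𝓝 z]
        fun w => fderiv ℝ φ w e - fderiv ℝ χ w e := by
      filter_upwards [eventually_differentiableAt hφ, eventually_differentiableAt hχ]
        with w hφw hχw
      rw [fderiv_fun_sub hφw hχw, sub_apply]
    rw [hfirst.fderiv_eq, fderiv_fun_sub (differentiableAt_fderiv_apply hφ e)
      (differentiableAt_fderiv_apply hχ e), sub_apply]
  exact (congrArg₂ (· + ·) (hpd (1, 0)) (hpd (0, 1))).trans (add_sub_add_comm _ _ _ _).symm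

lemma lap_comp_add_right (c : ℝ × ℝ) : lap (fun w => φ (w + c)) z = lap φ (z + c) := by
  have hpd1 : pd1 (fun w => φ (w + c)) = fun w => pd1 φ (w + c) := by
    ext w
    simp only [pd1, fderiv_comp_add_right]
  have hpd2 : pd2 (fun w => φ (w + c)) = fun w => pd2 φ (w + c) := by
    ext w
    simp only [pd2, fderiv_comp_add_right]
  rw [lap, hpd1, hpd2, pd1, pd2, fderiv_comp_add_right, fderiv_comp_add_right]
  rfl

lemma fderiv_mul_fst_snd {p q : ℝ → ℝ} (hp : Differentiable ℝ p) (hq : Differentiable ℝ q)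
    (w e : ℝ × ℝ) : fderiv ℝ (fun w : ℝ × ℝ => p w.1 * q w.2) w e =
      e.1 * (deriv p w.1 * q w.2) + e.2 * (p w.1 * deriv q w.2) := by
  have hp' := (hp w.1).hasDerivAt.comp_hasFDerivAt w (hasFDerivAt_fst (𝕜 := ℝ))
  have hq' := (hq w.2).hasDerivAt.comp_hasFDerivAt w (hasFDerivAt_snd (𝕜 := ℝ))
  rw [show (fun w : ℝ × ℝ => p w.1 * q w.2) = (p ∘ Prod.fst) * (q ∘ Prod.snd) from rfl,
    (hp'.mul hq').fderiv]
  simp only [Function.comp_apply, add_apply, smul_apply, ContinuousLinearMap.coe_fst',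
    ContinuousLinearMap.coe_snd', smul_eq_mul]
  ring

lemma lap_mul_fst_snd {p q : ℝ → ℝ} (hp : ContDiff ℝ 2 p) (hq : ContDiff ℝ 2 q) :
    lap (fun w => p w.1 * q w.2) z =
      deriv (deriv p) z.1 * q z.2 + p z.1 * deriv (deriv q) z.2 := by
  have hp₁ : Differentiable ℝ p := hp.differentiable (by norm_num)
  have hq₁ : Differentiable ℝ q := hq.differentiable (by norm_num)
  have hp₂ : Differentiable ℝ (deriv p) := hp.differentiable_deriv_two
  have hq₂ : Differentiable ℝ (deriv q) := hq.differentiable_deriv_two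
  have hpd1 : pd1 (fun w => p w.1 * q w.2) = fun w => deriv p w.1 * q w.2 := by
    ext w
    simp [pd1, fderiv_mul_fst_snd hp₁ hq₁]
  have hpd2 : pd2 (fun w => p w.1 * q w.2) = fun w => p w.1 * deriv q w.2 := by
    ext w
    simp [pd2, fderiv_mul_fst_snd hp₁ hq₁]
  rw [lap, hpd1, hpd2, pd1, pd2, fderiv_mul_fst_snd hp₂ hq₁, fderiv_mul_fst_snd hp₁ hq₂]
  simp

lemma le_of_lap_lt_of_le_frontier {K : Set (ℝ × ℝ)} (hK : IsCompact K)
    (hφ : ContinuousOn φ K) (hχ : ContinuousOn χ K)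
    (hφ₂ : ∀ w ∈ interior K, ContDiffAt ℝ 2 φ w) (hχ₂ : ∀ w ∈ interior K, ContDiffAt ℝ 2 χ w)
    (hlap : ∀ w ∈ interior K, χ w < φ w → lap χ w < lap φ w)
    (hfrontier : ∀ w ∈ frontier K, φ w ≤ χ w) (hz : z ∈ K) : φ z ≤ χ z := by
  by_contra! hlt
  obtain ⟨p, hpK, hp⟩ := hK.exists_isMinOn ⟨z, hz⟩ (hχ.sub hφ)
  have hneg : χ p < φ p := by
    have hpz : χ p - φ p ≤ χ z - φ z := hp hz
    linarith
  have hint : p ∈ interior K := by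
    by_contra hp_int
    exact (hfrontier p ⟨subset_closure hpK, hp_int⟩).not_gt hneg
  have hmin : IsLocalMin (fun w => χ w - φ w) p := hp.isLocalMin (mem_interior_iff_mem_nhds.1 hint)
  have hnonneg := lap_nonneg_of_isLocalMin ((hχ₂ p hint).sub (hφ₂ p hint)) hmin
  rw [lap_sub (hχ₂ p hint) (hφ₂ p hint)] at hnonneg
  linarith [hlap p hint hneg]

end Laplacian

/-- Pointwise superharmonicity of a `C²` function, in the classical sense. -/
def SuperharmonicAt (d : ℝ × ℝ → ℝ) (z : ℝ × ℝ) : Prop :=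
  ContDiffAt ℝ 2 d z ∧ lap d z ≤ 0

section Harnack

lemma frontier_uIcc (a b : ℝ) : frontier (uIcc a b) = {a, b} := by
  rcases le_total a b with h | h
  · rw [uIcc_of_le h, frontier_Icc h]
  · rw [uIcc_of_ge h, frontier_Icc h, pair_comm]

lemma contDiff_cos_mul_sinh (ν κ A x Y : ℝ) {n : WithTop ℕ∞} :
    ContDiff ℝ n fun z : ℝ × ℝ => cos (ν * (z.1 - x)) * (A * sinh (κ * (Y - z.2))) := by
  fun_prop

lemma lap_cos_mul_sinh (ν κ A x Y : ℝ) (z : ℝ × ℝ) :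
    lap (fun z => cos (ν * (z.1 - x)) * (A * sinh (κ * (Y - z.2)))) z =
      (κ ^ 2 - ν ^ 2) * (cos (ν * (z.1 - x)) * (A * sinh (κ * (Y - z.2)))) := by
  have hcos' (s : ℝ) : HasDerivAt (fun s => cos (ν * (s - x))) (-ν * sin (ν * (s - x))) s := by
    refine (((hasDerivAt_id' s).sub_const x).const_mul ν).cos.congr_deriv ?_
    ring
  have hcos'' (s : ℝ) :
      HasDerivAt (fun s => -ν * sin (ν * (s - x))) (-ν ^ 2 * cos (ν * (s - x))) s := by
    refine ((((hasDerivAt_id' s).sub_const x).const_mul ν).sin.const_mul (-ν)).congr_deriv ?_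
    ring
  have hsinh' (t : ℝ) : HasDerivAt (fun t => A * sinh (κ * (Y - t)))
      (-(A * κ) * cosh (κ * (Y - t))) t := by
    refine ((((hasDerivAt_id' t).const_sub Y).const_mul κ).sinh.const_mul A).congr_deriv ?_
    ring
  have hsinh'' (t : ℝ) : HasDerivAt (fun t => -(A * κ) * cosh (κ * (Y - t)))
      (κ ^ 2 * (A * sinh (κ * (Y - t)))) t := by
    refine ((((hasDerivAt_id' t).const_sub Y).const_mul κ).cosh.const_mul _).congr_deriv ?_
    ring
  rw [lap_mul_fst_snd (p := fun s => cos (ν * (s - x))) (q := fun t => A * sinh (κ * (Y - t)))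
    (by fun_prop) (by fun_prop), deriv_eq hcos', deriv_eq hsinh', (hcos'' _).deriv,
    (hsinh'' _).deriv]
  ring

lemma cos_mul_sinh_le_of_superharmonicAt {d : ℝ × ℝ → ℝ} {K : Set (ℝ × ℝ)} {ν κ A x Y : ℝ}
    (hfreq : |ν| < |κ|) (hK : IsCompact K) (hnonneg : ∀ z ∈ K, 0 ≤ d z)
    (hsuper : ∀ z ∈ K, SuperharmonicAt d z)
    (hfrontier : ∀ z ∈ frontier K, cos (ν * (z.1 - x)) * (A * sinh (κ * (Y - z.2))) ≤ d z)
    {z : ℝ × ℝ} (hz : z ∈ K) : cos (ν * (z.1 - x)) * (A * sinh (κ * (Y - z.2))) ≤ d z := by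
  have hsmooth := contDiff_cos_mul_sinh ν κ A x Y (n := 2)
  refine le_of_lap_lt_of_le_frontier hK hsmooth.continuous.continuousOn
    (fun w hw => (hsuper w hw).1.continuousAt.continuousWithinAt) (fun w _ => hsmooth.contDiffAt)
    (fun w hw => (hsuper w (interior_subset hw)).1) (fun w hw hlt => ?_) hfrontier hz
  rw [lap_cos_mul_sinh]
  exact (hsuper w (interior_subset hw)).2.trans_lt
    (mul_pos (sub_pos.2 (sq_lt_sq.2 hfreq)) ((hnonneg w (interior_subset hw)).trans_lt hlt))

lemma sinh_le_of_superharmonicAt {d : ℝ × ℝ → ℝ} {x r y Y lam m : ℝ} (hr : 0 < r) (hyY : y ≠ Y)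
    (hm : 0 ≤ m) (hlam : 0 < lam) (hfreq : π * |Y - y| < 2 * r * lam)
    (hnonneg : ∀ z ∈ Icc (x - r) (x + r) ×ˢ uIcc y Y, 0 ≤ d z)
    (hsuper : ∀ z ∈ Icc (x - r) (x + r) ×ˢ uIcc y Y, SuperharmonicAt d z)
    (hedge : ∀ s ∈ Icc (x - r) (x + r), m ≤ d (s, y)) {y' : ℝ} (hy' : y' ∈ uIcc y Y) :
    m / sinh lam * sinh (lam * ((Y - y') / (Y - y))) ≤ d (x, y') := by
  have hYy : Y - y ≠ 0 := sub_ne_zero.2 hyY.symm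
  have hfreq' : |π / (2 * r)| < |lam / (Y - y)| := by
    rw [abs_div, abs_div, abs_of_pos pi_pos, abs_of_pos hlam, abs_of_pos (by positivity),
      div_lt_div_iff₀ (by positivity) (by positivity)]
    linarith
  have hside : ∀ s ∈ ({x - r, x + r} : Set ℝ), cos (π / (2 * r) * (s - x)) = 0 := by
    rintro s (rfl | rfl)
    · rw [show π / (2 * r) * (x - r - x) = -(π / 2) by field_simp; ring, cos_neg, cos_pi_div_two]
    · rw [show π / (2 * r) * (x + r - x) = π / 2 by field_simp; ring, cos_pi_div_two]
  have hbottom : m / sinh lam * sinh (lam / (Y - y) * (Y - y)) = m := by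
    rw [div_mul_cancel₀ _ hYy, div_mul_cancel₀ _ (sinh_pos_iff.2 hlam).ne']
  have hle := cos_mul_sinh_le_of_superharmonicAt (A := m / sinh lam) (x := x) (Y := Y)
    hfreq' (isCompact_Icc.prod isCompact_uIcc) hnonneg hsuper ?_
    (show (x, y') ∈ Icc (x - r) (x + r) ×ˢ uIcc y Y from ⟨⟨by linarith, by linarith⟩, hy'⟩)
  · simpa [div_mul_eq_mul_div, mul_div_assoc] using hle
  rintro ⟨s, t⟩ hz
  have hd : 0 ≤ d (s, t) := hnonneg _ ((isClosed_Icc.prod isClosed_Icc).frontier_subset hz)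
  rw [frontier_prod_eq, isClosed_Icc.closure_eq, frontier_Icc (by linarith), frontier_uIcc] at hz
  rcases hz with ⟨hs, rfl | rfl⟩ | ⟨hs, -⟩
  · simp only [hbottom]
    exact (mul_le_of_le_one_left hm (cos_le_one _)).trans (hedge s hs)
  · simpa using hd
  · simpa [hside s hs] using hd

-- A barrier that vanishes slightly beyond the target height is still positive there.
lemma exists_overshoot {a b ρ W y y' : ℝ} (hρ : 0 < ρ) (hW : b - a ≤ W)
    (hy : y ∈ Icc (a + ρ) (b - ρ)) (hy' : y' ∈ Icc (a + ρ) (b - ρ)) :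
    ∃ Y ∈ Icc (a + ρ / 2) (b - ρ / 2),
      y ≠ Y ∧ y' ∈ uIcc y Y ∧ ρ / (2 * W) ≤ (Y - y') / (Y - y) := by
  obtain ⟨hya, hyb⟩ := hy
  obtain ⟨hya', hyb'⟩ := hy'
  rcases le_total y y' with h | h
  · refine ⟨y' + ρ / 2, ⟨by linarith, by linarith⟩, by linarith, ?_, ?_⟩
    · exact mem_uIcc_of_le h (by linarith)
    · rw [div_le_div_iff₀ (by linarith) (by linarith)]
      nlinarith
  · refine ⟨y' - ρ / 2, ⟨by linarith, by linarith⟩, by linarith, ?_, ?_⟩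
    · exact mem_uIcc_of_ge (by linarith) h
    · rw [← neg_div_neg_eq (y' - ρ / 2 - y'), div_le_div_iff₀ (by linarith) (by linarith)]
      nlinarith

lemma sinh_le_of_superharmonicAt_rectangle {d : ℝ × ℝ → ℝ} {a b x r ρ W m y y' : ℝ} (hr : 0 < r)
    (hρ : 0 < ρ) (hm : 0 ≤ m) (hW : b - a ≤ W)
    (hnonneg : ∀ z ∈ Icc (x - r) (x + r) ×ˢ Icc (a + ρ / 2) (b - ρ / 2), 0 ≤ d z)
    (hsuper : ∀ z ∈ Icc (x - r) (x + r) ×ˢ Icc (a + ρ / 2) (b - ρ / 2), SuperharmonicAt d z)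
    (hy : y ∈ Icc (a + ρ) (b - ρ)) (hy' : y' ∈ Icc (a + ρ) (b - ρ))
    (hedge : ∀ s ∈ Icc (x - r) (x + r), m ≤ d (s, y)) :
    m / sinh (2 * W / r) * sinh (ρ / r) ≤ d (x, y') := by
  obtain ⟨Y, hY, hyY, hmem, hratio⟩ := exists_overshoot hρ hW hy hy'
  have hW₀ : 0 < W := by linarith [hy.1, hy.2]
  have hsub : Icc (x - r) (x + r) ×ˢ uIcc y Y ⊆
      Icc (x - r) (x + r) ×ˢ Icc (a + ρ / 2) (b - ρ / 2) :=
    prod_mono_right (uIcc_subset_Icc ⟨by linarith [hy.1], by linarith [hy.2]⟩ hY)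
  have hlength : π * |Y - y| < 2 * r * (2 * W / r) := by
    have hYy : |Y - y| ≤ W :=
      abs_sub_le_iff.2 ⟨by linarith [hY.2, hy.1], by linarith [hY.1, hy.2]⟩
    calc π * |Y - y| ≤ π * W := by gcongr
      _ < 4 * W := by gcongr; exact pi_lt_four
      _ = 2 * r * (2 * W / r) := by field_simp; ring
  calc m / sinh (2 * W / r) * sinh (ρ / r)
      = m / sinh (2 * W / r) * sinh (2 * W / r * (ρ / (2 * W))) := by
        congr 2
        field_simp
    _ ≤ m / sinh (2 * W / r) * sinh (2 * W / r * ((Y - y') / (Y - y))) := by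
        refine mul_le_mul_of_nonneg_left (sinh_le_sinh.2 ?_)
          (div_nonneg hm (sinh_nonneg_iff.2 (by positivity)))
        gcongr
    _ ≤ d (x, y') := sinh_le_of_superharmonicAt hr hyY hm (by positivity) hlength
        (fun z hz => hnonneg z (hsub hz)) (fun z hz => hsuper z (hsub hz)) hedge hmem

/-- The planar region `{k₀ < x₂ < k₁}` between two graphs. -/
def strip (k₀ k₁ : ℝ → ℝ) : Set (ℝ × ℝ) := {z | k₀ z.1 < z.2 ∧ z.2 < k₁ z.1}

variable {k₀ k₁ : ℝ → ℝ}

lemma exists_forall_mem_strip (hk₀ : UniformContinuous k₀) (hk₁ : UniformContinuous k₁) {ρ : ℝ}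
    (hρ : 0 < ρ) :
    ∃ r > 0, ∀ x s, dist s x ≤ r → ∀ t ∈ Icc (k₀ x + ρ) (k₁ x - ρ), (s, t) ∈ strip k₀ k₁ := by
  obtain ⟨r₀, hr₀, h₀⟩ := Metric.uniformContinuous_iff.1 hk₀ ρ hρ
  obtain ⟨r₁, hr₁, h₁⟩ := Metric.uniformContinuous_iff.1 hk₁ ρ hρ
  refine ⟨min r₀ r₁ / 2, by positivity, fun x s hs t ht => ?_⟩
  have hs' : dist s x < min r₀ r₁ := hs.trans_lt (half_lt_self (by positivity))
  have h₀s := (abs_lt.1 (h₀ (hs'.trans_le (min_le_left _ _)))).2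
  have h₁s := (abs_lt.1 (h₁ (hs'.trans_le (min_le_right _ _)))).1
  exact ⟨by linarith [ht.1], by linarith [ht.2]⟩

lemma exists_pos_le_of_superharmonicAt_strip {d : ℝ × ℝ → ℝ} {W ρ m : ℝ}
    (hk₀ : UniformContinuous k₀) (hk₁ : UniformContinuous k₁) (hW₀ : 0 < W)
    (hW : ∀ x, k₁ x - k₀ x ≤ W) (hd : UniformContinuous d)
    (hnonneg : ∀ z ∈ strip k₀ k₁, 0 ≤ d z) (hsuper : ∀ z ∈ strip k₀ k₁, SuperharmonicAt d z)
    (hρ : 0 < ρ) (hm : 0 < m) :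
    ∃ δ > 0, ∀ x, ∀ y ∈ Icc (k₀ x + ρ) (k₁ x - ρ), ∀ y' ∈ Icc (k₀ x + ρ) (k₁ x - ρ),
      m ≤ d (x, y) → δ ≤ d (x, y') := by
  obtain ⟨r₁, hr₁, hmem⟩ := exists_forall_mem_strip hk₀ hk₁ (half_pos hρ)
  obtain ⟨r₂, hr₂, hclose⟩ := Metric.uniformContinuous_iff_le.1 hd (m / 2) (half_pos hm)
  set r := min r₁ r₂
  have hr : 0 < r := lt_min hr₁ hr₂
  have hδ : 0 < m / 2 / sinh (2 * W / r) * sinh (ρ / r) :=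
    mul_pos (div_pos (half_pos hm) (sinh_pos_iff.2 (by positivity)))
      (sinh_pos_iff.2 (by positivity))
  refine ⟨_, hδ, fun x y hy y' hy' hmy => ?_⟩
  have hdist : ∀ s ∈ Icc (x - r) (x + r), dist s x ≤ r := fun s hs =>
    abs_sub_le_iff.2 ⟨by linarith [hs.2], by linarith [hs.1]⟩
  have hrect : ∀ z ∈ Icc (x - r) (x + r) ×ˢ Icc (k₀ x + ρ / 2) (k₁ x - ρ / 2), z ∈ strip k₀ k₁ :=
    fun z hz => hmem x z.1 ((hdist z.1 hz.1).trans (min_le_left _ _)) z.2 hz.2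
  refine sinh_le_of_superharmonicAt_rectangle hr hρ (half_pos hm).le (hW x)
    (fun z hz => hnonneg z (hrect z hz)) (fun z hz => hsuper z (hrect z hz)) hy hy' fun s hs => ?_
  have hsx : dist (s, y) (x, y) ≤ r₂ := by
    rw [dist_prod_same_right]
    exact (hdist s hs).trans (min_le_right _ _)
  linarith [(abs_le.1 (hclose hsx)).1]

end Harnack

-- Mean value theorem for `y ↦ ∫ t in y..y + ε, g t`.
lemma exists_increment_ge {g : ℝ → ℝ} (hg : Continuous g) (hmono : Monotone g) {a b ε : ℝ}
    (hab : a < b) (hε : 0 ≤ ε) :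
    ∃ ξ ∈ Icc a b, ε * (g b - g (a + ε)) ≤ (b - a) * (g (ξ + ε) - g ξ) := by
  set F : ℝ → ℝ := fun y => ∫ t in (0 : ℝ)..y, g t
  have hint (s t : ℝ) : IntervalIntegrable g volume s t := hg.intervalIntegrable s t
  have hF (y : ℝ) : HasDerivAt F (g y) y := (hg.integral_hasStrictDerivAt 0 y).hasDerivAt
  have hF_sub (y : ℝ) : F (y + ε) - F y = ∫ t in y..y + ε, g t :=
    intervalIntegral.integral_interval_sub_left (hint _ _) (hint _ _)
  have hG (y : ℝ) : HasDerivAt (fun y => F (y + ε) - F y) (g (y + ε) - g y) y :=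
    ((hF (y + ε)).comp_add_const y ε).sub (hF y)
  obtain ⟨ξ, hξ, hslope⟩ := exists_hasDerivAt_eq_slope _ _ hab
    (fun y _ => (hG y).continuousAt.continuousWithinAt) (fun y _ => hG y)
  have hlower : ε * g b ≤ F (b + ε) - F b := by
    calc ε * g b = ∫ _ in b..b + ε, g b := by simp
      _ ≤ ∫ t in b..b + ε, g t := intervalIntegral.integral_mono_on (by linarith)
          intervalIntegrable_const (hint _ _) fun t ht => hmono ht.1
      _ = F (b + ε) - F b := (hF_sub b).symm
  have hupper : F (a + ε) - F a ≤ ε * g (a + ε) := by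
    calc F (a + ε) - F a = ∫ t in a..a + ε, g t := hF_sub a
      _ ≤ ∫ _ in a..a + ε, g (a + ε) := intervalIntegral.integral_mono_on (by linarith)
          (hint _ _) intervalIntegrable_const fun t ht => hmono ht.2
      _ = ε * g (a + ε) := by simp
  refine ⟨ξ, Ioo_subset_Icc_self hξ, ?_⟩
  rw [hslope, mul_div_cancel₀ _ (sub_ne_zero.2 hab.ne')]
  linarith

/-- A function on the whole plane which solves `Δu = f(u)` on the strip between the graphs of `h₀`
and `h₁`, is nondecreasing in the vertical direction, and equals `0` below the strip and `Q` above
it. This is what a monotone solution of the boundary value problem becomes once extended by its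
boundary values; being defined everywhere, it can be shifted vertically. -/
structure IsExtendedSolution (Q : ℝ) (f h₀ h₁ : ℝ → ℝ) (u : ℝ × ℝ → ℝ) : Prop where
  uniformContinuous : UniformContinuous u
  monotone_snd : ∀ x, Monotone fun y => u (x, y)
  eq_zero : ∀ x, ∀ y ≤ h₀ x, u (x, y) = 0
  eq_top : ∀ x, ∀ y ≥ h₁ x, u (x, y) = Q
  contDiffAt : ∀ z ∈ strip h₀ h₁, ContDiffAt ℝ 2 u z
  lap_eq : ∀ z ∈ strip h₀ h₁, lap u z = f (u z)

/-- The difference between the upward slide of `u` by `τ` and `v`; the sliding method shows that it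
is nonnegative for smaller and smaller `τ`. -/
def slideDiff (u v : ℝ × ℝ → ℝ) (τ : ℝ) (z : ℝ × ℝ) : ℝ := u (z + (0, τ)) - v z

lemma slideDiff_apply (u v : ℝ × ℝ → ℝ) (τ x y : ℝ) :
    slideDiff u v τ (x, y) = u (x, y + τ) - v (x, y) := by
  simp [slideDiff]

namespace IsExtendedSolution

variable {Q τ : ℝ} {f h₀ h₁ : ℝ → ℝ} {u v : ℝ × ℝ → ℝ}

lemma mem_Icc (hu : IsExtendedSolution Q f h₀ h₁ u) (z : ℝ × ℝ) : u z ∈ Icc 0 Q := by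
  obtain ⟨x, y⟩ := z
  constructor
  · rw [← hu.eq_zero x (min y (h₀ x)) (min_le_right _ _)]
    exact hu.monotone_snd x (min_le_left _ _)
  · rw [← hu.eq_top x (max y (h₁ x)) (le_max_right _ _)]
    exact hu.monotone_snd x (le_max_left _ _)

lemma uniformContinuous_slideDiff (hu : IsExtendedSolution Q f h₀ h₁ u)
    (hv : IsExtendedSolution Q f h₀ h₁ v) : UniformContinuous (slideDiff u v τ) :=
  (hu.uniformContinuous.comp (uniformContinuous_id.add uniformContinuous_const)).sub
    hv.uniformContinuous

lemma superharmonicAt_slideDiff (hu : IsExtendedSolution Q f h₀ h₁ u)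
    (hv : IsExtendedSolution Q f h₀ h₁ v) (hf : AntitoneOn f (Icc 0 Q)) (hτ : 0 ≤ τ)
    {z : ℝ × ℝ} (hz : z ∈ strip h₀ fun x => h₁ x - τ) (hnonneg : 0 ≤ slideDiff u v τ z) :
    SuperharmonicAt (slideDiff u v τ) z := by
  obtain ⟨hz₀, hz₁⟩ := hz
  have hz_mem : z ∈ strip h₀ h₁ := ⟨hz₀, by linarith⟩
  have hslide_mem : z + (0, τ) ∈ strip h₀ h₁ := by
    constructor <;> simp only [Prod.fst_add, Prod.snd_add, add_zero] <;> linarith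
  have hu₂ : ContDiffAt ℝ 2 (fun w => u (w + (0, τ))) z :=
    (hu.contDiffAt _ hslide_mem).comp z (contDiffAt_id.add contDiffAt_const)
  have hv₂ := hv.contDiffAt z hz_mem
  refine ⟨hu₂.sub hv₂, ?_⟩
  calc lap (slideDiff u v τ) z = lap u (z + (0, τ)) - lap v z := by
        rw [← lap_comp_add_right]
        exact lap_sub hu₂ hv₂
    _ = f (u (z + (0, τ))) - f (v z) := by rw [hu.lap_eq _ hslide_mem, hv.lap_eq _ hz_mem]
    _ ≤ 0 := sub_nonpos.2 (hf (hv.mem_Icc _) (hu.mem_Icc _) (sub_nonneg.1 hnonneg))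

lemma lower_lt_upper (hu : IsExtendedSolution Q f h₀ h₁ u) (hQ : 0 < Q) (x : ℝ) : h₀ x < h₁ x := by
  by_contra! hle
  exact hQ.ne ((hu.eq_zero x (h₀ x) le_rfl).symm.trans (hu.eq_top x (h₀ x) hle))

lemma slideDiff_self_nonneg (hu : IsExtendedSolution Q f h₀ h₁ u) (hτ : 0 ≤ τ) (z : ℝ × ℝ) :
    0 ≤ slideDiff u u τ z := by
  obtain ⟨x, y⟩ := z
  rw [slideDiff_apply]
  exact sub_nonneg.2 (hu.monotone_snd x (by linarith))

variable {W : ℝ}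

lemma exists_le_slideDiff_self {ε : ℝ} (hu : IsExtendedSolution Q f h₀ h₁ u) (hQ : 0 < Q)
    (hW : ∀ x, h₁ x - h₀ x ≤ W) (hε : 0 < ε)
    (hclose : ∀ ⦃z w⦄, dist z w ≤ 2 * ε → dist (u z) (u w) ≤ Q / 4) (x : ℝ) :
    ∃ ξ ∈ Icc (h₀ x + ε) (h₁ x - ε - ε), ε * Q / (2 * W) ≤ slideDiff u u ε (x, ξ) := by
  have hW₀ : 0 < W := by linarith [hu.lower_lt_upper hQ x, hW x]
  have hclose_snd (s t : ℝ) (hst : |s - t| ≤ 2 * ε) : |u (x, s) - u (x, t)| ≤ Q / 4 :=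
    hclose (by rwa [dist_prod_same_left])
  have hbottom : u (x, h₀ x + ε + ε) ≤ Q / 4 := by
    have h := hclose_snd (h₀ x + ε + ε) (h₀ x) (abs_le.2 ⟨by linarith, by linarith⟩)
    rw [hu.eq_zero x (h₀ x) le_rfl, sub_zero] at h
    exact (abs_le.1 h).2
  have htop : 3 * Q / 4 ≤ u (x, h₁ x - ε - ε) := by
    have h := hclose_snd (h₁ x - ε - ε) (h₁ x) (abs_le.2 ⟨by linarith, by linarith⟩)
    rw [hu.eq_top x (h₁ x) le_rfl] at h
    linarith [(abs_le.1 h).1]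
  have hroom : h₀ x + ε < h₁ x - ε - ε := by
    by_contra! hle
    have hmono := hu.monotone_snd x (show h₁ x - ε - ε ≤ h₀ x + ε + ε by linarith)
    dsimp only at hmono
    linarith
  obtain ⟨ξ, hξ, hincr⟩ := exists_increment_ge
    (hu.uniformContinuous.continuous.comp (by fun_prop : Continuous fun y : ℝ => (x, y)))
    (hu.monotone_snd x) hroom hε.le
  refine ⟨ξ, hξ, (div_le_iff₀' (by positivity)).2 ?_⟩
  have hincr' : ε * (Q / 2) ≤ W * slideDiff u u ε (x, ξ) := by
    calc ε * (Q / 2) ≤ ε * (u (x, h₁ x - ε - ε) - u (x, h₀ x + ε + ε)) := by gcongr; linarith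
      _ ≤ (h₁ x - ε - ε - (h₀ x + ε)) * slideDiff u u ε (x, ξ) := by
        rw [slideDiff_apply]
        exact hincr
      _ ≤ W * slideDiff u u ε (x, ξ) := by
        gcongr
        · exact hu.slideDiff_self_nonneg hε.le _
        · linarith [hW x]
  linarith

lemma exists_pos_le_and_le_sub (hu : IsExtendedSolution Q f h₀ h₁ u) (hQ : 0 < Q)
    (hf : AntitoneOn f (Icc 0 Q)) (hh₀ : UniformContinuous h₀) (hh₁ : UniformContinuous h₁)
    (hW : ∀ x, h₁ x - h₀ x ≤ W) {η : ℝ} (hη : 0 < η) :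
    ∃ δ > 0, ∀ x, δ ≤ u (x, h₀ x + η) ∧ u (x, h₁ x - η) ≤ Q - δ := by
  have hW₀ : 0 < W := (sub_pos.2 (hu.lower_lt_upper hQ 0)).trans_le (hW 0)
  obtain ⟨r, hr, hclose⟩ := Metric.uniformContinuous_iff_le.1 hu.uniformContinuous (Q / 4)
    (by positivity)
  obtain ⟨ε, hε, hεr, hεη⟩ : ∃ ε > 0, 2 * ε ≤ r ∧ 2 * ε ≤ η :=
    ⟨min r η / 2, by positivity, by linarith [min_le_left r η], by linarith [min_le_right r η]⟩
  obtain ⟨δ, hδ, hharnack⟩ := exists_pos_le_of_superharmonicAt_strip hh₀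
    (hh₁.sub uniformContinuous_const) hW₀ (fun x => by linarith [hW x])
    (hu.uniformContinuous_slideDiff hu) (fun z _ => hu.slideDiff_self_nonneg hε.le z)
    (fun z hz => hu.superharmonicAt_slideDiff hu hf hε.le hz (hu.slideDiff_self_nonneg hε.le z))
    hε (m := ε * Q / (2 * W)) (by positivity)
  refine ⟨δ, hδ, fun x => ?_⟩
  obtain ⟨ξ, hξ, hmξ⟩ := hu.exists_le_slideDiff_self hQ hW hε (fun z w h => hclose (h.trans hεr)) x
  have hincr := fun y hy => hharnack x ξ hξ y hy hmξ
  simp only [slideDiff_apply] at hincr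
  have hends : h₀ x + ε ≤ h₁ x - ε - ε := hξ.1.trans hξ.2
  constructor
  · calc δ ≤ u (x, h₀ x + ε + ε) := by
          linarith [hincr _ (left_mem_Icc.2 hends), (hu.mem_Icc (x, h₀ x + ε)).1]
      _ ≤ u (x, h₀ x + η) := hu.monotone_snd x (by linarith)
  · calc u (x, h₁ x - η) ≤ u (x, h₁ x - ε - ε) := hu.monotone_snd x (by linarith)
      _ ≤ Q - δ := by
          linarith [hincr _ (right_mem_Icc.2 hends), (hu.mem_Icc (x, h₁ x - ε - ε + ε)).2]

lemma exists_pos_le_slideDiff_of_near_boundary (hu : IsExtendedSolution Q f h₀ h₁ u)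
    (hv : IsExtendedSolution Q f h₀ h₁ v) (hQ : 0 < Q) (hf : AntitoneOn f (Icc 0 Q))
    (hh₀ : UniformContinuous h₀) (hh₁ : UniformContinuous h₁) (hW : ∀ x, h₁ x - h₀ x ≤ W)
    (hτ : 0 < τ) :
    ∃ δ > 0, ∀ x, δ ≤ slideDiff u v τ (x, h₀ x) ∧
      ∀ y ∈ Icc (h₁ x - τ) (h₁ x - τ / 2), δ ≤ slideDiff u v τ (x, y) := by
  obtain ⟨δ₀, hδ₀, hu_strict⟩ := hu.exists_pos_le_and_le_sub hQ hf hh₀ hh₁ hW hτ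
  obtain ⟨δ₁, hδ₁, hv_strict⟩ := hv.exists_pos_le_and_le_sub hQ hf hh₀ hh₁ hW (half_pos hτ)
  refine ⟨min δ₀ δ₁, lt_min hδ₀ hδ₁, fun x => ⟨?_, fun y hy => ?_⟩⟩
  · rw [slideDiff_apply, hv.eq_zero x _ le_rfl, sub_zero]
    exact (min_le_left _ _).trans (hu_strict x).1
  · rw [slideDiff_apply, hu.eq_top x _ (by linarith [hy.1])]
    have hvy : v (x, y) ≤ v (x, h₁ x - τ / 2) := hv.monotone_snd x hy.2
    linarith [(hv_strict x).2, min_le_right δ₀ δ₁]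

lemma exists_pos_le_slideDiff (hu : IsExtendedSolution Q f h₀ h₁ u)
    (hv : IsExtendedSolution Q f h₀ h₁ v) (hQ : 0 < Q) (hf : AntitoneOn f (Icc 0 Q))
    (hh₀ : UniformContinuous h₀) (hh₁ : UniformContinuous h₁) (hW : ∀ x, h₁ x - h₀ x ≤ W)
    (hτ : 0 < τ) (hnonneg : ∀ z, 0 ≤ slideDiff u v τ z) :
    ∃ δ > 0, ∀ x, ∀ y ∈ Icc (h₀ x) (h₁ x - τ / 2), δ ≤ slideDiff u v τ (x, y) := by
  have hd : UniformContinuous (slideDiff u v τ) := hu.uniformContinuous_slideDiff hv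
  obtain ⟨δ, hδ, hboundary⟩ :=
    hu.exists_pos_le_slideDiff_of_near_boundary hv hQ hf hh₀ hh₁ hW hτ
  obtain ⟨ρ, hρ, hclose⟩ := Metric.uniformContinuous_iff_le.1 hd (δ / 2) (half_pos hδ)
  obtain ⟨δ', hδ', hharnack⟩ := exists_pos_le_of_superharmonicAt_strip hh₀
    (hh₁.sub uniformContinuous_const) ((sub_pos.2 (hu.lower_lt_upper hQ 0)).trans_le (hW 0))
    (fun x => by linarith [hW x]) hd (fun z _ => hnonneg z)
    (fun z hz => hu.superharmonicAt_slideDiff hv hf hτ.le hz (hnonneg z)) hρ (half_pos hδ)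
  refine ⟨min (δ / 2) δ', lt_min (half_pos hδ) hδ', fun x y hy => min_le_iff.2 ?_⟩
  obtain ⟨hbottom, htop⟩ := hboundary x
  have hnear {s t : ℝ} (ht : δ ≤ slideDiff u v τ (x, t)) (hst : |s - t| ≤ ρ) :
      δ / 2 ≤ slideDiff u v τ (x, s) := by
    have hdist : dist (x, s) (x, t) ≤ ρ := by rwa [dist_prod_same_left]
    linarith [(abs_le.1 (hclose hdist)).1]
  rcases le_total y (h₀ x + ρ) with hy₀ | hy₀
  · exact Or.inl (hnear hbottom (abs_le.2 ⟨by linarith [hy.1], by linarith⟩))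
  rcases le_total (h₁ x - τ) y with hy₁ | hy₁
  · exact Or.inl ((half_le_self hδ.le).trans (htop y ⟨hy₁, hy.2⟩))
  rcases le_total (h₁ x - τ - ρ) y with hy₂ | hy₂
  · exact Or.inl (hnear (htop (h₁ x - τ) ⟨le_rfl, by linarith⟩)
      (abs_le.2 ⟨by linarith, by linarith⟩))
  · exact Or.inr (hharnack x (h₀ x + ρ) ⟨le_rfl, hy₀.trans hy₂⟩ y ⟨hy₀, hy₂⟩
      (hnear hbottom (abs_le.2 ⟨by linarith, by linarith⟩)))

lemma exists_slideDiff_nonneg_lt (hu : IsExtendedSolution Q f h₀ h₁ u)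
    (hv : IsExtendedSolution Q f h₀ h₁ v) (hQ : 0 < Q) (hf : AntitoneOn f (Icc 0 Q))
    (hh₀ : UniformContinuous h₀) (hh₁ : UniformContinuous h₁) (hW : ∀ x, h₁ x - h₀ x ≤ W)
    (hτ : 0 < τ) (hnonneg : ∀ z, 0 ≤ slideDiff u v τ z) :
    ∃ σ ∈ Ico 0 τ, ∀ z, 0 ≤ slideDiff u v σ z := by
  obtain ⟨δ, hδ, hgap⟩ := hu.exists_pos_le_slideDiff hv hQ hf hh₀ hh₁ hW hτ hnonneg
  obtain ⟨r, hr, hclose⟩ := Metric.uniformContinuous_iff_le.1 hu.uniformContinuous δ hδ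
  obtain ⟨σ, hσ_half, hστ, hσr⟩ : ∃ σ, τ / 2 ≤ σ ∧ σ < τ ∧ τ - σ ≤ r := by
    refine ⟨max (τ / 2) (τ - r), le_max_left _ _, max_lt (by linarith) (by linarith), ?_⟩
    linarith [le_max_right (τ / 2) (τ - r)]
  refine ⟨σ, ⟨by linarith, hστ⟩, fun ⟨x, y⟩ => ?_⟩
  rw [slideDiff_apply]
  rcases le_total y (h₀ x) with hy₀ | hy₀
  · rw [hv.eq_zero x y hy₀, sub_zero]
    exact (hu.mem_Icc _).1
  rcases le_total (h₁ x - τ / 2) y with hy₁ | hy₁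
  · rw [hu.eq_top x (y + σ) (by linarith)]
    exact sub_nonneg.2 (hv.mem_Icc _).2
  · have hgap_y := hgap x y ⟨hy₀, hy₁⟩
    have hu_close : |u (x, y + σ) - u (x, y + τ)| ≤ δ := by
      refine hclose ?_
      rw [dist_prod_same_left]
      exact abs_le.2 ⟨by linarith, by linarith⟩
    rw [slideDiff_apply] at hgap_y
    linarith [(abs_le.1 hu_close).1]

lemma le_of_antitoneOn (hv : IsExtendedSolution Q f h₀ h₁ v)
    (hu : IsExtendedSolution Q f h₀ h₁ u) (hQ : 0 < Q) (hf : AntitoneOn f (Icc 0 Q))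
    (hh₀ : UniformContinuous h₀) (hh₁ : UniformContinuous h₁) (hW : ∀ x, h₁ x - h₀ x ≤ W) :
    v ≤ u := by
  set S : Set ℝ := {τ | 0 ≤ τ ∧ ∀ z, 0 ≤ slideDiff u v τ z}
  have hS_closed : IsClosed S := by
    have hcont (z : ℝ × ℝ) : Continuous fun τ => slideDiff u v τ z :=
      (hu.uniformContinuous.continuous.comp (by fun_prop)).sub continuous_const
    simp only [S, ofPred_and, ofPred_forall]
    exact isClosed_Ici.inter (isClosed_iInter fun z => isClosed_le continuous_const (hcont z))
  have hS_bdd : BddBelow S := ⟨0, fun τ hτ => hτ.1⟩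
  have hS_nonempty : S.Nonempty := by
    refine ⟨W, (sub_nonneg.2 (hu.lower_lt_upper hQ 0).le).trans (hW 0), fun ⟨x, y⟩ => ?_⟩
    rw [slideDiff_apply]
    rcases le_total y (h₀ x) with hy | hy
    · rw [hv.eq_zero x y hy, sub_zero]
      exact (hu.mem_Icc _).1
    · rw [hu.eq_top x (y + W) (by linarith [hW x])]
      exact sub_nonneg.2 (hv.mem_Icc _).2
  obtain ⟨hinf_nonneg, hinf⟩ := hS_closed.csInf_mem hS_nonempty hS_bdd
  have hzero : sInf S = 0 := by
    refine hinf_nonneg.antisymm' (le_of_not_gt fun hpos => ?_)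
    obtain ⟨σ, hσ, hσS⟩ := hu.exists_slideDiff_nonneg_lt hv hQ hf hh₀ hh₁ hW hpos hinf
    exact (csInf_le hS_bdd ⟨hσ.1, hσS⟩).not_gt hσ.2
  intro z
  have hz := hinf z
  rwa [hzero, slideDiff, show ((0, 0) : ℝ × ℝ) = 0 from rfl, add_zero, sub_nonneg] at hz

end IsExtendedSolution

section BoundaryValueProblem

variable {Q W : ℝ} {f h₀ h₁ : ℝ → ℝ} {ψ ψ₁ ψ₂ : ℝ × ℝ → ℝ}

/-- The solutions whose uniqueness is in question: `C²` functions on the strip between the graphs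
of `h₀` and `h₁`, uniformly continuous up to the boundary, nondecreasing in `x₂`, which solve
`Δψ = f(ψ)` with boundary values `0` on the lower and `Q` on the upper graph. -/
structure IsMonotoneSolution (Q : ℝ) (f h₀ h₁ : ℝ → ℝ) (ψ : ℝ × ℝ → ℝ) : Prop where
  contDiffOn : ContDiffOn ℝ 2 ψ (strip h₀ h₁)
  uniformContinuousOn : UniformContinuousOn ψ (closure (strip h₀ h₁))
  lap_eq : ∀ z ∈ strip h₀ h₁, lap ψ z = f (ψ z)
  eq_zero : ∀ x, ψ (x, h₀ x) = 0
  eq_top : ∀ x, ψ (x, h₁ x) = Q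
  pd2_nonneg : ∀ z ∈ strip h₀ h₁, 0 ≤ pd2 ψ z

/-- The vertical projection of the plane onto the closed region between the graphs of `h₀ ≤ h₁`,
by which functions on that region are extended to the plane. -/
def verticalClamp (h₀ h₁ : ℝ → ℝ) (z : ℝ × ℝ) : ℝ × ℝ := (z.1, max (h₀ z.1) (min (h₁ z.1) z.2))

lemma verticalClamp_of_mem_strip {z : ℝ × ℝ} (hz : z ∈ strip h₀ h₁) :
    verticalClamp h₀ h₁ z = z := by
  rw [verticalClamp, min_eq_right hz.2.le, max_eq_right hz.1.le]

lemma uniformContinuous_verticalClamp (hh₀ : UniformContinuous h₀) (hh₁ : UniformContinuous h₁) :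
    UniformContinuous (verticalClamp h₀ h₁) :=
  uniformContinuous_fst.prodMk <| lipschitzWith_max.uniformContinuous.comp <|
    (hh₀.comp uniformContinuous_fst).prodMk <| lipschitzWith_min.uniformContinuous.comp <|
      (hh₁.comp uniformContinuous_fst).prodMk uniformContinuous_snd

lemma isOpen_strip (hh₀ : Continuous h₀) (hh₁ : Continuous h₁) : IsOpen (strip h₀ h₁) :=
  (isOpen_lt (hh₀.comp continuous_fst) continuous_snd).inter
    (isOpen_lt continuous_snd (hh₁.comp continuous_fst))

lemma mem_closure_strip {x y : ℝ} (hlt : h₀ x < h₁ x) (hy : y ∈ Icc (h₀ x) (h₁ x)) :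
    (x, y) ∈ closure (strip h₀ h₁) := by
  rw [← closure_Ioo hlt.ne] at hy
  exact map_mem_closure (by fun_prop : Continuous fun t : ℝ => (x, t)) hy fun t ht => ht

lemma verticalClamp_snd_mem_Icc {z : ℝ × ℝ} (hle : h₀ z.1 ≤ h₁ z.1) :
    (verticalClamp h₀ h₁ z).2 ∈ Icc (h₀ z.1) (h₁ z.1) :=
  ⟨le_max_left _ _, max_le hle (min_le_left _ _)⟩

namespace IsMonotoneSolution

lemma monotoneOn_snd (hψ : IsMonotoneSolution Q f h₀ h₁ ψ) (hh₀ : Continuous h₀)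
    (hh₁ : Continuous h₁) {x : ℝ} (hlt : h₀ x < h₁ x) :
    MonotoneOn (fun y => ψ (x, y)) (Icc (h₀ x) (h₁ x)) := by
  have hderiv : ∀ y ∈ Ioo (h₀ x) (h₁ x), HasDerivAt (fun y => ψ (x, y)) (pd2 ψ (x, y)) y := by
    intro y hy
    have hdiff : DifferentiableAt ℝ ψ (x, y) :=
      (hψ.contDiffOn.contDiffAt ((isOpen_strip hh₀ hh₁).mem_nhds hy)).differentiableAt (by norm_num)
    exact hdiff.hasFDerivAt.comp_hasDerivAt y ((hasDerivAt_const y x).prodMk (hasDerivAt_id y))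
  refine monotoneOn_of_hasDerivWithinAt_nonneg (f' := fun y => pd2 ψ (x, y)) (convex_Icc _ _)
    ?_ ?_ ?_
  · exact hψ.uniformContinuousOn.continuousOn.comp (by fun_prop) fun y => mem_closure_strip hlt
  · rw [interior_Icc]
    exact fun y hy => (hderiv y hy).hasDerivWithinAt
  · rw [interior_Icc]
    exact fun y hy => hψ.pd2_nonneg (x, y) hy

lemma isExtendedSolution (hψ : IsMonotoneSolution Q f h₀ h₁ ψ) (hh₀ : UniformContinuous h₀)
    (hh₁ : UniformContinuous h₁) (hlt : ∀ x, h₀ x < h₁ x) :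
    IsExtendedSolution Q f h₀ h₁ (ψ ∘ verticalClamp h₀ h₁) := by
  have hopen := isOpen_strip hh₀.continuous hh₁.continuous
  have hclamp (z : ℝ × ℝ) : (verticalClamp h₀ h₁ z).2 ∈ Icc (h₀ z.1) (h₁ z.1) :=
    verticalClamp_snd_mem_Icc (hlt z.1).le
  have heq {z : ℝ × ℝ} (hz : z ∈ strip h₀ h₁) : ψ ∘ verticalClamp h₀ h₁ =ᶠ[𝓝 z] ψ := by
    filter_upwards [hopen.mem_nhds hz] with w hw
    rw [Function.comp_apply, verticalClamp_of_mem_strip hw]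
  refine ⟨?_, fun x y y' hy => ?_, fun x y hy => ?_, fun x y hy => ?_, fun z hz => ?_,
    fun z hz => ?_⟩
  · exact uniformContinuousOn_univ.1 <| hψ.uniformContinuousOn.comp
      (uniformContinuous_verticalClamp hh₀ hh₁).uniformContinuousOn
      fun z _ => mem_closure_strip (hlt z.1) (hclamp z)
  · exact hψ.monotoneOn_snd hh₀.continuous hh₁.continuous (hlt x) (hclamp (x, y)) (hclamp (x, y'))
      (max_le_max le_rfl (min_le_min le_rfl hy))
  · simpa [verticalClamp, max_eq_left ((min_le_right _ _).trans hy)] using hψ.eq_zero x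
  · simpa [verticalClamp, min_eq_left hy, max_eq_right (hlt x).le] using hψ.eq_top x
  · exact (hψ.contDiffOn.contDiffAt (hopen.mem_nhds hz)).congr_of_eventuallyEq (heq hz)
  · rw [lap_congr (heq hz), (heq hz).eq_of_nhds]
    exact hψ.lap_eq z hz

end IsMonotoneSolution

theorem stmt19_general (hQ : 0 < Q) (hf : AntitoneOn f (Icc 0 Q)) (hh₀ : UniformContinuous h₀)
    (hh₁ : UniformContinuous h₁) (hlt : ∀ x, h₀ x < h₁ x) (hW : ∀ x, h₁ x - h₀ x ≤ W)
    (hψ₁ : IsMonotoneSolution Q f h₀ h₁ ψ₁) (hψ₂ : IsMonotoneSolution Q f h₀ h₁ ψ₂) :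
    EqOn ψ₁ ψ₂ (strip h₀ h₁) := by
  have hu₁ := hψ₁.isExtendedSolution hh₀ hh₁ hlt
  have hu₂ := hψ₂.isExtendedSolution hh₀ hh₁ hlt
  intro z hz
  have heq := congrFun ((hu₁.le_of_antitoneOn hu₂ hQ hf hh₀ hh₁ hW).antisymm
    (hu₂.le_of_antitoneOn hu₁ hQ hf hh₀ hh₁ hW)) z
  rwa [Function.comp_apply, Function.comp_apply, verticalClamp_of_mem_strip hz] at heq

end BoundaryValueProblem

lemma strictMonoOn_cubic {Q : ℝ} (hQ : 0 < Q) :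
    StrictMonoOn (fun t : ℝ => Q * (3 * t ^ 2 - 2 * t ^ 3)) (Icc 0 1) := by
  refine strictMonoOn_of_deriv_pos (convex_Icc 0 1) (by fun_prop) fun t ht => ?_
  rw [interior_Icc] at ht
  have hderiv :
      HasDerivAt (fun t : ℝ => Q * (3 * t ^ 2 - 2 * t ^ 3)) (6 * Q * (t * (1 - t))) t := by
    refine ((((hasDerivAt_pow 2 t).const_mul 3).sub
      ((hasDerivAt_pow 3 t).const_mul 2)).const_mul Q).congr_deriv ?_
    ring
  rw [hderiv.deriv]
  exact mul_pos (by positivity) (mul_pos ht.1 (sub_pos.2 ht.2))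

lemma antitoneOn_of_inverse_cubic {Q : ℝ} (hQ : 0 < Q) {κ f : ℝ → ℝ}
    (hκ : ∀ t ∈ Icc (0 : ℝ) 1, κ (Q * (3 * t ^ 2 - 2 * t ^ 3)) = t)
    (hf : ∀ s, f s = 6 * Q * (1 - 2 * κ s)) : AntitoneOn f (Icc 0 Q) := by
  set q : ℝ → ℝ := fun t => Q * (3 * t ^ 2 - 2 * t ^ 3) with hq
  have hsurj : Icc 0 Q ⊆ q '' Icc 0 1 := by
    have hends : Icc 0 Q = Icc (q 0) (q 1) := by norm_num [hq]
    exact hends.subset.trans (intermediate_value_Icc zero_le_one (by fun_prop))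
  intro s hs s' hs' hss'
  obtain ⟨t, ht, rfl⟩ := hsurj hs
  obtain ⟨t', ht', rfl⟩ := hsurj hs'
  have htt' : t ≤ t' := ((strictMonoOn_cubic hQ).le_iff_le ht ht').1 hss'
  rw [hf, hf, hκ t ht, hκ t' ht']
  gcongr

section ConstOutside

variable {h : ℝ → ℝ} {l r c d : ℝ}

lemma eq_IccExtend_of_const_outside (hlr : l ≤ r) (hl : ∀ x ≤ l, h x = c) (hr : ∀ x ≥ r, h x = d) :
    h = IccExtend hlr fun t => h t := by
  ext x
  rcases le_total x l with hx | hx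
  · rw [IccExtend_of_le_left _ _ hx, hl x hx, hl l le_rfl]
  rcases le_total r x with hx' | hx'
  · rw [IccExtend_of_right_le _ _ hx', hr x hx', hr r le_rfl]
  · rw [IccExtend_of_mem _ _ ⟨hx, hx'⟩]

lemma uniformContinuous_of_const_outside (hh : Continuous h) (hlr : l ≤ r)
    (hl : ∀ x ≤ l, h x = c) (hr : ∀ x ≥ r, h x = d) : UniformContinuous h := by
  rw [eq_IccExtend_of_const_outside hlr hl hr]
  exact (CompactSpace.uniformContinuous_of_continuous
    (hh.comp continuous_subtype_val)).comp (LipschitzWith.projIcc hlr).uniformContinuous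

lemma bddAbove_range_of_const_outside (hh : Continuous h) (hlr : l ≤ r)
    (hl : ∀ x ≤ l, h x = c) (hr : ∀ x ≥ r, h x = d) : BddAbove (range h) := by
  rw [eq_IccExtend_of_const_outside hlr hl hr, IccExtend_range, ← image_eq_range]
  exact (isCompact_Icc.image hh).bddAbove

end ConstOutside

/-- Uniqueness: there is at most one `ψ ∈ C²(Ω)`, Lipschitz on the closure, with
`0 ≤ ψ ≤ Q`, solving `Δψ = f(ψ)` in `Ω`, `ψ = 0` on `Γ₀`, `ψ = Q` on `Γ₁`, and
`∂_{x₂}ψ ≥ 0` in `Ω`; any two such functions coincide on `Ω`. -/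
theorem stmt19
    (Q α : ℝ) (hQ : 0 < Q) (hα : α ∈ Set.Ioo (0 : ℝ) 1)
    (κ : ℝ → ℝ) (hκ : ∀ t ∈ Set.Icc (0 : ℝ) 1, κ (Q * (3 * t ^ 2 - 2 * t ^ 3)) = t)
    (f : ℝ → ℝ) (hf : ∀ s : ℝ, f s = 6 * Q * (1 - 2 * κ s))
    (h₀ h₁ : ℝ → ℝ)
    (hh₀ : ContDiff ℝ 2 h₀) (hh₁ : ContDiff ℝ 2 h₁)
    (hh₀α : ∃ C : ℝ, ∀ x y : ℝ, |deriv (deriv h₀) x - deriv (deriv h₀) y| ≤ C * |x - y| ^ α)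
    (hh₁α : ∃ C : ℝ, ∀ x y : ℝ, |deriv (deriv h₁) x - deriv (deriv h₁) y| ≤ C * |x - y| ^ α)
    (hlt : ∀ x₁ : ℝ, h₀ x₁ < h₁ x₁)
    (Lm Lp a b : ℝ) (hLm : Lm < 0) (hLp : 0 < Lp)
    (ha : 0 ≤ a) (hab : a < b) (hb : b ≤ 1)
    (hup : ∀ x₁ ≤ Lm, h₀ x₁ = 0 ∧ h₁ x₁ = 1)
    (hdown : ∀ x₁ ≥ Lp, h₀ x₁ = a ∧ h₁ x₁ = b)
    (Ω : Set (ℝ × ℝ)) (hΩ : Ω = {x : ℝ × ℝ | h₀ x.1 < x.2 ∧ x.2 < h₁ x.1})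
    (ψ₁ ψ₂ : ℝ × ℝ → ℝ)
    (hC2₁ : ContDiffOn ℝ 2 ψ₁ Ω) (hC2₂ : ContDiffOn ℝ 2 ψ₂ Ω)
    (hLip₁ : ∃ K, LipschitzOnWith K ψ₁ (closure Ω))
    (hLip₂ : ∃ K, LipschitzOnWith K ψ₂ (closure Ω))
    (hbd₁ : ∀ x ∈ Ω, 0 ≤ ψ₁ x ∧ ψ₁ x ≤ Q) (hbd₂ : ∀ x ∈ Ω, 0 ≤ ψ₂ x ∧ ψ₂ x ≤ Q)
    (heq₁ : ∀ x ∈ Ω, lap ψ₁ x = f (ψ₁ x)) (heq₂ : ∀ x ∈ Ω, lap ψ₂ x = f (ψ₂ x))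
    (hΓ₀₁ : ∀ x₁ : ℝ, ψ₁ (x₁, h₀ x₁) = 0) (hΓ₀₂ : ∀ x₁ : ℝ, ψ₂ (x₁, h₀ x₁) = 0)
    (hΓ₁₁ : ∀ x₁ : ℝ, ψ₁ (x₁, h₁ x₁) = Q) (hΓ₁₂ : ∀ x₁ : ℝ, ψ₂ (x₁, h₁ x₁) = Q)
    (hmono₁ : ∀ x ∈ Ω, 0 ≤ pd2 ψ₁ x) (hmono₂ : ∀ x ∈ Ω, 0 ≤ pd2 ψ₂ x) :
    ∀ x ∈ Ω, ψ₁ x = ψ₂ x := by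
  subst hΩ
  have hLmp : Lm ≤ Lp := (hLm.trans hLp).le
  have huc₀ : UniformContinuous h₀ := uniformContinuous_of_const_outside hh₀.continuous hLmp
    (fun x hx => (hup x hx).1) fun x hx => (hdown x hx).1
  have huc₁ : UniformContinuous h₁ := uniformContinuous_of_const_outside hh₁.continuous hLmp
    (fun x hx => (hup x hx).2) fun x hx => (hdown x hx).2
  obtain ⟨W, hW⟩ : BddAbove (range fun x => h₁ x - h₀ x) :=
    bddAbove_range_of_const_outside (c := 1 - 0) (d := b - a) (hh₁.continuous.sub hh₀.continuous)
      hLmp (fun x hx => by simp only [hup x hx]) (fun x hx => by simp only [hdown x hx])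
  obtain ⟨K₁, hK₁⟩ := hLip₁
  obtain ⟨K₂, hK₂⟩ := hLip₂
  exact stmt19_general hQ (antitoneOn_of_inverse_cubic hQ hκ hf) huc₀ huc₁ hlt
    (fun x => hW (mem_range_self x))
    ⟨hC2₁, hK₁.uniformContinuousOn, heq₁, hΓ₀₁, hΓ₁₁, hmono₁⟩
    ⟨hC2₂, hK₂.uniformContinuousOn, heq₂, hΓ₀₂, hΓ₁₂, hmono₂⟩
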